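/- Let k ≥ 3 and d be positive reals with d < 2(k−1)log(k−1), and set d_{k−1} = 2(k−1)log(k−1). For a k×k doubly stochastic matrix M = [m_{pq}], define φ(M) = −(1/k)∑_{p,q} m_{pq} log m_{pq} + (d/2) log(1 − 2/k + (1/k²)∑_{p,q} m_{pq}²). Then φ(M) ≤ log k + d·log(1 − 1/k) − ((d_{k−1} − d)/(4(k−1)²)) · ∑_{p,q} (m_{pq} − 1/k)². -/

import Mathlib

open Finset

/-!
Everything rests on a sharp entropy bound: a probability vector `p` on `k ≥ 2` points satisfies
`c_k * ∑ (p i - 1 / k) ^ 2 ≤ D(p ‖ uniform)` with `c_k = (k - 1) log (k - 1) / (k - 2)`, read as `1`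
when `k = 2`. It is proved by induction on `k`. Splitting off the largest coordinate `x`, the chain
rule decomposes both sides into the contribution of the vector
`(x, (1 - x) / (k - 1), …, (1 - x) / (k - 1))` and that of the normalized remaining coordinates. The
first is a tangent-line inequality, because binary entropy is concave as a function of
`(1 - 2 x) ^ 2` (its power series in that variable has nonpositive coefficients apart from the
constant term). For the second, the induction hypothesis has room to spare, as `1 - x ≤ 1 - 1 / k`.

Summing over the rows of the matrix bounds the entropy term of `φ`, and the logarithmic term is
controlled by `x / 2 ≤ log (1 + x) ≤ x` on `[0, 1]`.
-/

section Real

open Real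

lemma add_one_mul_pow_mul_sub_le {R : Type*} [CommRing R] [LinearOrder R] [IsStrictOrderedRing R]
    {a b : R} (ha : 0 ≤ a) (hb : 0 ≤ b) (n : ℕ) :
    (n + 1) * b ^ n * (a - b) ≤ a ^ (n + 1) - b ^ (n + 1) := by
  induction n with
  | zero => simp
  | succ n ih =>
    have h := mul_le_mul_of_nonneg_left ih ha
    have : 0 ≤ (n + 1) * b ^ n * (a - b) ^ 2 := by positivity
    push_cast
    linear_combination h + this

lemma half_le_log_one_add {x : ℝ} (hx₀ : 0 ≤ x) (hx₁ : x ≤ 1) : x / 2 ≤ log (1 + x) := by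
  refine le_trans ?_ (le_log_one_add_of_nonneg hx₀)
  rw [div_le_div_iff₀ two_pos (by linarith)]
  nlinarith

lemma mul_log_one_add_le {d D x : ℝ} (hD : 0 ≤ D) (hdD : d ≤ D) (hx₀ : 0 ≤ x) (hx₁ : x ≤ 1) :
    d * log (1 + x) ≤ D * x - (D - d) / 2 * x := by
  have hupper : log (1 + x) ≤ x := by linarith [log_le_sub_one_of_pos (x := 1 + x) (by linarith)]
  have h₁ := mul_le_mul_of_nonneg_left hupper hD
  have h₂ := mul_le_mul_of_nonneg_left (half_le_log_one_add hx₀ hx₁) (sub_nonneg.2 hdD)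
  linarith

lemma log_one_sub_two_div_add {k S : ℝ} (hk : 1 < k) (hS : 0 ≤ S) :
    log (1 - 2 / k + 1 / k ^ 2 * (S + 1)) =
      2 * log (1 - 1 / k) + log (1 + S / (k - 1) ^ 2) := by
  have hk₁ : 0 < k - 1 := sub_pos.2 hk
  have hk' : 0 < 1 - 1 / k := by rw [one_sub_div (by linarith)]; positivity
  have hfactor : 1 - 2 / k + 1 / k ^ 2 * (S + 1) = (1 - 1 / k) ^ 2 * (1 + S / (k - 1) ^ 2) := by
    field_simp
    ring
  rw [hfactor, log_mul (by positivity) (by positivity), log_pow, Nat.cast_ofNat]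

lemma log_eq_sub_one_mul_dslope (t : ℝ) : log t = (t - 1) * dslope log 1 t := by
  simpa using (sub_smul_dslope log 1 t).symm

lemma hasSum_dslope_log {t : ℝ} (ht : 1 ≤ t) :
    HasSum (fun i : ℕ => ((t - 1) / (t + 1)) ^ (2 * i) / (2 * i + 1))
      ((t + 1) / 2 * dslope log 1 t) := by
  rcases ht.eq_or_lt with rfl | ht
  · simpa [dslope_same] using hasSum_single (f := fun i : ℕ => (0 : ℝ) ^ (2 * i) / (2 * i + 1)) 0
      fun i hi => by simp [hi]
  · have ht' : t - 1 ≠ 0 := by linarith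
    have h := (hasSum_log_one_add (a := t - 1) (by linarith)).mul_left ((t + 1) / (2 * (t - 1)))
    rw [add_sub_cancel, log_eq_sub_one_mul_dslope] at h
    convert! h using 1
    · ext i
      rw [show t - 1 + 2 = t + 1 by ring, pow_succ]
      field_simp
    · field_simp

lemma dslope_log_nonneg {t : ℝ} (ht : 1 ≤ t) : 0 ≤ dslope log 1 t := by
  have h := (hasSum_dslope_log ht).nonneg fun i => by rw [pow_mul]; positivity
  exact nonneg_of_mul_nonneg_right h (by linarith)

lemma mul_log_add_one_le_mul_log {t : ℝ} (ht : 2 ≤ t) :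
    (t - 1) * (t + 1) ^ 2 * log (t + 1) ≤ t ^ 2 * (t + 2) * log t := by
  have ht₀ : 0 < t := by linarith
  have ht₁ : 0 < t - 1 := by linarith
  have hsucc : log (t + 1) ≤ log t + 1 / t := by
    have h := log_le_sub_one_of_pos (x := (t + 1) / t) (by positivity)
    rw [log_div (by positivity) ht₀.ne', add_div, div_self ht₀.ne'] at h
    linarith
  have hlower : 2 * (t - 1) / (t + 1) ≤ log t := by
    convert le_log_one_add_of_nonneg ht₁.le using 2 <;> ring
  have hmid : (t - 1) * (t + 1) ^ 2 * (1 / t) ≤ (t ^ 2 + t + 1) * log t :=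
    calc (t - 1) * (t + 1) ^ 2 * (1 / t) ≤ (t ^ 2 + t + 1) * (2 * (t - 1) / (t + 1)) := by
          rw [mul_one_div, ← mul_div_assoc, div_le_div_iff₀ ht₀ (by positivity)]
          have hcubic : 0 ≤ t ^ 3 - t ^ 2 - t - 1 := by nlinarith
          linarith [mul_nonneg ht₁.le hcubic]
      _ ≤ (t ^ 2 + t + 1) * log t := by gcongr
  calc (t - 1) * (t + 1) ^ 2 * log (t + 1)
      ≤ (t - 1) * (t + 1) ^ 2 * (log t + 1 / t) := by gcongr
    _ ≤ (t - 1) * (t + 1) ^ 2 * log t + (t ^ 2 + t + 1) * log t := by rw [mul_add]; gcongr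
    _ = t ^ 2 * (t + 2) * log t := by ring

lemma mul_dslope_log_add_one_le {m : ℕ} (hm : 1 ≤ m) :
    ((m : ℝ) + 1) ^ 2 / (m + 2) * dslope log 1 (m + 1) ≤ m * dslope log 1 m := by
  rcases hm.eq_or_lt with rfl | hm
  · have h := log_eq_sub_one_mul_dslope 2
    norm_num [dslope_same] at h ⊢
    linarith [log_two_lt_d9]
  · have ht : (2 : ℝ) ≤ m := by exact_mod_cast hm
    have h := mul_log_add_one_le_mul_log ht
    rw [log_eq_sub_one_mul_dslope (m + 1), log_eq_sub_one_mul_dslope m] at h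
    have hc : 0 < (m : ℝ) * (m - 1) := mul_pos (by linarith) (by linarith)
    rw [div_mul_eq_mul_div, div_le_iff₀ (by positivity)]
    exact le_of_mul_le_mul_left (by linarith) hc

end Real

section BinEntropy

open Real

lemma hasSum_log_two_sub_binEntropy {x : ℝ} (hx : x ∈ Set.Ioo 0 1) :
    HasSum (fun i : ℕ => ((1 - 2 * x) ^ 2) ^ (i + 1) / (2 * (i + 1) * (2 * i + 1)))
      (log 2 - binEntropy x) := by
  obtain ⟨hx₀, hx₁⟩ := hx
  have hu : |1 - 2 * x| < 1 := abs_lt.2 ⟨by linarith, by linarith⟩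
  have hu₂ : |(1 - 2 * x) ^ 2| < 1 := by rwa [abs_pow, sq_lt_one_iff₀ (abs_nonneg _)]
  have h := ((hasSum_log_sub_log_of_abs_lt_one hu).mul_left ((1 - 2 * x) / 2)).sub
    ((hasSum_pow_div_log_of_abs_lt_one hu₂).div_const 2)
  convert! h using 1
  · ext i
    rw [← pow_mul]
    field_simp
    ring
  · rw [show 1 - (1 - 2 * x) ^ 2 = 2 * (2 * (x * (1 - x))) by ring,
      show 1 + (1 - 2 * x) = 2 * (1 - x) by ring, show 1 - (1 - 2 * x) = 2 * x by ring,
      binEntropy, log_inv, log_inv]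
    have : 1 - x ≠ 0 := by linarith
    simp only [log_mul, ne_eq, OfNat.ofNat_ne_zero, not_false_eq_true, mul_eq_zero, hx₀.ne', this,
      or_self]
    ring

/-- The tangent line at `x = a` of binary entropy as a concave function of `(1 - 2 x) ^ 2`. -/
lemma binEntropy_le_of_hasSum {a x s : ℝ} (ha : a ∈ Set.Ioo 0 1) (hx : x ∈ Set.Icc 0 1)
    (hs : HasSum (fun i : ℕ => (1 - 2 * a) ^ (2 * i) / (2 * i + 1)) s) :
    binEntropy x ≤ binEntropy a - s / 2 * ((1 - 2 * x) ^ 2 - (1 - 2 * a) ^ 2) := by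
  rw [← closure_Ioo zero_ne_one] at hx
  refine le_on_closure (f := binEntropy)
    (g := fun x => binEntropy a - s / 2 * ((1 - 2 * x) ^ 2 - (1 - 2 * a) ^ 2))
    (fun x hx => ?_) (by fun_prop) (by fun_prop) hx
  have h := hasSum_le (fun i => ?_)
    ((hasSum_log_two_sub_binEntropy ha).add
      (hs.mul_right (((1 - 2 * x) ^ 2 - (1 - 2 * a) ^ 2) / 2)))
    (hasSum_log_two_sub_binEntropy hx)
  · linarith
  · have := add_one_mul_pow_mul_sub_le (sq_nonneg (1 - 2 * x)) (sq_nonneg (1 - 2 * a)) i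
    rw [pow_mul, div_mul_div_comm, div_add_div _ _ (by positivity) (by positivity),
      div_le_div_iff₀ (by positivity) (by positivity)]
    have hc : (0 : ℝ) ≤ 4 * (i + 1) * (2 * i + 1) ^ 2 := by positivity
    linarith [mul_le_mul_of_nonneg_left this hc]

lemma binEntropy_div_add_one {t : ℝ} (ht : 0 < t) :
    binEntropy (t / (t + 1)) = log (t + 1) - t / (t + 1) * log t := by
  have h : 1 - t / (t + 1) = (t + 1)⁻¹ := by field_simp; ring
  rw [binEntropy, h, inv_inv, inv_div, log_div (by positivity) ht.ne']
  field_simp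
  ring

lemma dslope_log_mul_sq_le {t x : ℝ} (ht : 1 ≤ t) (hx : x ∈ Set.Icc 0 1) :
    dslope log 1 t * (((t + 1) * x - 1) ^ 2 / (t + 1)) ≤
      log (t + 1) - binEntropy x - (1 - x) * log t := by
  have ht₀ : 0 < t := by linarith
  have ha : t / (t + 1) ∈ Set.Ioo 0 1 :=
    ⟨by positivity, (div_lt_one (by positivity)).2 (by linarith)⟩
  have hv : (1 - 2 * (t / (t + 1))) ^ 2 = ((t - 1) / (t + 1)) ^ 2 := by field_simp; ring
  have h := binEntropy_le_of_hasSum ha hx (by simpa only [pow_mul, hv] using hasSum_dslope_log ht)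
  rw [binEntropy_div_add_one ht₀, log_eq_sub_one_mul_dslope t] at h
  rw [log_eq_sub_one_mul_dslope t]
  refine le_of_eq_of_le ?_ (sub_le_sub_right (sub_le_sub_left h _) _)
  field_simp
  ring

end BinEntropy

section Simplex

variable {ι : Type*} [Fintype ι]

/-- The relative entropy `D(p ‖ u)` of a probability vector `p` with respect to the uniform
distribution `u`, in the form `log k - H(p)`. -/
noncomputable def klUniform (p : ι → ℝ) : ℝ :=
  ∑ i, p i * Real.log (p i) + Real.log (Fintype.card ι)

/-- The squared Euclidean distance of `p` from the uniform probability vector. -/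
noncomputable def sqDistUniform (p : ι → ℝ) : ℝ :=
  ∑ i, (p i - 1 / (Fintype.card ι : ℝ)) ^ 2

lemma sqDistUniform_nonneg (p : ι → ℝ) : 0 ≤ sqDistUniform p :=
  Finset.sum_nonneg fun _ _ => sq_nonneg _

lemma sqDistUniform_eq [Nonempty ι] {p : ι → ℝ} (hp : ∑ i, p i = 1) :
    sqDistUniform p = ∑ i, p i ^ 2 - 1 / (Fintype.card ι : ℝ) := by
  simp only [sqDistUniform, sub_sq, sum_add_distrib, sum_sub_distrib, ← sum_mul, ← mul_sum, hp,
    sum_const, card_univ, nsmul_eq_mul]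
  field_simp
  ring

lemma sqDistUniform_le_one_sub [Nonempty ι] {p : ι → ℝ} (hp : p ∈ stdSimplex ℝ ι) :
    sqDistUniform p ≤ 1 - 1 / (Fintype.card ι : ℝ) := by
  rw [sqDistUniform_eq hp.2, ← hp.2]
  gcongr with i
  exact pow_le_of_le_one (hp.1 i) (mem_Icc_of_mem_stdSimplex hp i).2 two_ne_zero

section ChainRule

variable [DecidableEq ι] {p : ι → ℝ} {j : ι}

lemma cast_card_ne (j : ι) : (Fintype.card {i // i ≠ j} : ℝ) = Fintype.card ι - 1 := by
  rw [← Nat.cast_pred (Fintype.card_pos_iff.2 ⟨j⟩)]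
  exact congrArg _ (Set.card_ne_eq j)

lemma exists_mem_stdSimplex_eq_one_sub_mul [Nontrivial ι] (hp : p ∈ stdSimplex ℝ ι) (j : ι) :
    ∃ q ∈ stdSimplex ℝ {i // i ≠ j}, ∀ i : {i // i ≠ j}, p i = (1 - p j) * q i := by
  have hrest : ∑ i : {i // i ≠ j}, p i = 1 - p j := by
    rw [← hp.2, Fintype.sum_eq_add_sum_subtype_ne p j, add_sub_cancel_left]
  rcases (mem_Icc_of_mem_stdSimplex hp j).2.eq_or_lt with hj | hj
  · rw [hj, sub_self, sum_eq_zero_iff_of_nonneg fun i _ => hp.1 i.1] at hrest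
    obtain ⟨i, hi⟩ := exists_ne j
    exact ⟨_, single_mem_stdSimplex ℝ ⟨i, hi⟩, fun i => by rw [hrest i (mem_univ i), hj]; ring⟩
  · have hr : 0 < 1 - p j := sub_pos.2 hj
    refine ⟨fun i => p i / (1 - p j), ⟨fun i => div_nonneg (hp.1 i) hr.le, ?_⟩,
      fun i => (mul_div_cancel₀ _ hr.ne').symm⟩
    rw [← sum_div, hrest, div_self hr.ne']

variable {q : {i // i ≠ j} → ℝ}

lemma klUniform_eq_add (hq : ∑ i, q i = 1) (hpq : ∀ i : {i // i ≠ j}, p i = (1 - p j) * q i) :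
    klUniform p = Real.log (Fintype.card ι) - Real.binEntropy (p j)
      - (1 - p j) * Real.log (Fintype.card ι - 1) + (1 - p j) * klUniform q := by
  have hmul (a b : ℝ) : a * b * Real.log (a * b) = a * Real.log a * b + a * (b * Real.log b) := by
    have := Real.negMulLog_mul a b
    simp only [Real.negMulLog] at this
    linarith
  rw [klUniform, klUniform, Fintype.sum_eq_add_sum_subtype_ne _ j, cast_card_ne,
    Real.binEntropy_eq_negMulLog_add_negMulLog_one_sub]
  simp only [hpq, hmul, sum_add_distrib, ← mul_sum, hq, Real.negMulLog]
  ring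

lemma sqDistUniform_eq_add [Nontrivial ι] (hq : ∑ i, q i = 1)
    (hpq : ∀ i : {i // i ≠ j}, p i = (1 - p j) * q i) :
    sqDistUniform p =
      (Fintype.card ι * p j - 1) ^ 2 / (Fintype.card ι * (Fintype.card ι - 1)) +
        (1 - p j) ^ 2 * sqDistUniform q := by
  have hk : (Fintype.card ι : ℝ) - 1 ≠ 0 :=
    (sub_pos.2 (Nat.one_lt_cast.2 Fintype.one_lt_card)).ne'
  have : Nonempty {i // i ≠ j} := nonempty_subtype.2 (exists_ne j)
  have hp : ∑ i, p i = 1 := by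
    rw [Fintype.sum_eq_add_sum_subtype_ne p j]
    simp only [hpq, ← mul_sum, hq]
    ring
  rw [sqDistUniform_eq hp, sqDistUniform_eq hq, Fintype.sum_eq_add_sum_subtype_ne _ j,
    cast_card_ne]
  simp only [hpq, mul_pow, ← mul_sum]
  field_simp
  ring

end ChainRule

/-- The optimal constant `(k - 1) log (k - 1) / (k - 2)` in the entropy bound on `k` points;
`dslope` supplies its limiting value `1` at `k = 2`. -/
noncomputable def klConst (k : ℝ) : ℝ :=
  (k - 1) * dslope Real.log 1 (k - 1)

lemma klConst_nonneg {k : ℝ} (hk : 2 ≤ k) : 0 ≤ klConst k :=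
  mul_nonneg (by linarith) (dslope_log_nonneg (by linarith))

lemma div_mul_log_le_klConst {k : ℝ} (hk : 2 ≤ k) :
    k / (k - 1) * Real.log (k - 1) ≤ klConst k := by
  have hk₁ : 0 < k - 1 := by linarith
  rw [klConst, log_eq_sub_one_mul_dslope, ← mul_assoc]
  refine mul_le_mul_of_nonneg_right ?_ (dslope_log_nonneg (by linarith))
  rw [div_mul_eq_mul_div, div_le_iff₀ hk₁]
  nlinarith

lemma one_sub_mul_klConst_le {k : ℕ} (hk : 2 ≤ k) :
    (1 - 1 / ((k : ℝ) + 1)) * klConst (k + 1) ≤ klConst k := by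
  obtain ⟨m, rfl⟩ := Nat.exists_eq_add_of_le' (one_le_two.trans hk)
  convert mul_dslope_log_add_one_le (m := m) (by omega) using 1 <;>
    simp only [klConst, Nat.cast_add, Nat.cast_one, add_sub_cancel_right]
  field_simp
  ring

lemma klConst_mul_sqDistUniform_le_of_rest [DecidableEq ι] [Nontrivial ι]
    (hrest : ∀ (j : ι), ∀ q ∈ stdSimplex ℝ {i // i ≠ j},
      (1 - 1 / ((Fintype.card {i // i ≠ j} : ℝ) + 1)) * klConst (Fintype.card {i // i ≠ j} + 1) *
        sqDistUniform q ≤ klUniform q)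
    {p : ι → ℝ} (hp : p ∈ stdSimplex ℝ ι) :
    klConst (Fintype.card ι) * sqDistUniform p ≤ klUniform p := by
  obtain ⟨j, hj⟩ := Finite.exists_max p
  obtain ⟨q, hq, hpq⟩ := exists_mem_stdSimplex_eq_one_sub_mul hp j
  have hrest := hrest j q hq
  rw [cast_card_ne, sub_add_cancel] at hrest
  rw [klUniform_eq_add hq.2 hpq, sqDistUniform_eq_add hq.2 hpq]
  have hx := mem_Icc_of_mem_stdSimplex hp j
  have hk : (2 : ℝ) ≤ Fintype.card ι := by exact_mod_cast Fintype.one_lt_card (α := ι)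
  have hmax : 1 ≤ Fintype.card ι * p j := by
    simpa [hp.2] using sum_le_card_nsmul univ p (p j) fun i _ => hj i
  generalize p j = x at *
  generalize (Fintype.card ι : ℝ) = k at *
  have hk₁ : 0 < k - 1 := by linarith
  have htwo : klConst k * ((k * x - 1) ^ 2 / (k * (k - 1))) ≤
      Real.log k - Real.binEntropy x - (1 - x) * Real.log (k - 1) := by
    refine le_of_eq_of_le ?_ (by
      simpa only [sub_add_cancel] using dslope_log_mul_sq_le (t := k - 1) (by linarith) hx)
    rw [klConst]
    field_simp
  have hx' : 1 - x ≤ 1 - 1 / k := by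
    gcongr
    rwa [div_le_iff₀' (by linarith)]
  have hscale : klConst k * ((1 - x) ^ 2 * sqDistUniform q) ≤ (1 - x) * klUniform q :=
    calc klConst k * ((1 - x) ^ 2 * sqDistUniform q)
        = (1 - x) * ((1 - x) * (klConst k * sqDistUniform q)) := by ring
      _ ≤ (1 - x) * ((1 - 1 / k) * (klConst k * sqDistUniform q)) := by
          have := mul_nonneg (klConst_nonneg hk) (sqDistUniform_nonneg q)
          have := sub_nonneg.2 hx.2
          gcongr
      _ ≤ (1 - x) * klUniform q := by
          rw [← mul_assoc (1 - 1 / k)]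
          exact mul_le_mul_of_nonneg_left hrest (sub_nonneg.2 hx.2)
  linarith

/-- Since `klConst 1 = 0`, the bound with `klConst k` says too little at `k = 1` to start an
induction. The induction runs on the form in which the bound on `k` points enters the one on `k + 1`
points, which at `k = 1` reads `0 ≤ 0`. -/
lemma one_sub_mul_klConst_succ_mul_sqDistUniform_le :
    ∀ p ∈ stdSimplex ℝ ι,
      (1 - 1 / ((Fintype.card ι : ℝ) + 1)) * klConst (Fintype.card ι + 1) * sqDistUniform p ≤
        klUniform p := by
  induction hn : Fintype.card ι using Nat.strong_induction_on generalizing ι with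
  | _ n ih =>
  subst hn
  intro p hp
  cases subsingleton_or_nontrivial ι
  · cases isEmpty_or_nonempty ι
    · simp [stdSimplex_of_isEmpty_index] at hp
    · obtain ⟨_⟩ := nonempty_unique ι
      rw [stdSimplex_unique, Set.mem_singleton_iff] at hp
      simp [hp, sqDistUniform, klUniform]
  · classical
    have hcard (j : ι) : Fintype.card {i // i ≠ j} < Fintype.card ι :=
      Fintype.card_subtype_lt (x := j) (not_not_intro rfl)
    calc (1 - 1 / ((Fintype.card ι : ℝ) + 1)) * klConst (Fintype.card ι + 1) * sqDistUniform p
        ≤ klConst (Fintype.card ι) * sqDistUniform p :=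
          mul_le_mul_of_nonneg_right (one_sub_mul_klConst_le Fintype.one_lt_card)
            (sqDistUniform_nonneg p)
      _ ≤ klUniform p := klConst_mul_sqDistUniform_le_of_rest (fun j => ih _ (hcard j) rfl) hp

theorem klConst_mul_sqDistUniform_le_klUniform [Nontrivial ι] {p : ι → ℝ}
    (hp : p ∈ stdSimplex ℝ ι) :
    klConst (Fintype.card ι) * sqDistUniform p ≤ klUniform p := by
  classical
  exact klConst_mul_sqDistUniform_le_of_rest
    (fun _ => one_sub_mul_klConst_succ_mul_sqDistUniform_le) hp

end Simplex

section RowStochastic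

variable {ι : Type*} [Fintype ι] [Nontrivial ι] {M : Matrix ι ι ℝ}

lemma sum_sum_sq_eq (hM : ∀ p, M p ∈ stdSimplex ℝ ι) :
    ∑ p, ∑ q, M p q ^ 2 = ∑ p, sqDistUniform (M p) + 1 := by
  simp only [fun p => sqDistUniform_eq (hM p).2, sum_sub_distrib, sum_const, card_univ,
    nsmul_eq_mul]
  field_simp
  ring

lemma sum_sqDistUniform_le (hM : ∀ p, M p ∈ stdSimplex ℝ ι) :
    ∑ p, sqDistUniform (M p) ≤ Fintype.card ι - 1 := by
  calc ∑ p, sqDistUniform (M p) ≤ ∑ _p : ι, (1 - 1 / (Fintype.card ι : ℝ)) :=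
        sum_le_sum fun p _ => sqDistUniform_le_one_sub (hM p)
    _ = Fintype.card ι - 1 := by
        simp only [sum_const, card_univ, nsmul_eq_mul]
        field_simp

lemma neg_one_div_mul_sum_sum_mul_log_le (hM : ∀ p, M p ∈ stdSimplex ℝ ι) :
    -(1 / (Fintype.card ι : ℝ)) * ∑ p, ∑ q, M p q * Real.log (M p q) ≤
      Real.log (Fintype.card ι) -
        Real.log (Fintype.card ι - 1) / (Fintype.card ι - 1) * ∑ p, sqDistUniform (M p) := by
  have hk : (2 : ℝ) ≤ Fintype.card ι := by exact_mod_cast Fintype.one_lt_card (α := ι)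
  have hrows : ∑ p, (Fintype.card ι : ℝ) / (Fintype.card ι - 1) * Real.log (Fintype.card ι - 1) *
      sqDistUniform (M p) ≤ ∑ p, klUniform (M p) :=
    sum_le_sum fun p _ => (mul_le_mul_of_nonneg_right (div_mul_log_le_klConst hk)
      (sqDistUniform_nonneg _)).trans (klConst_mul_sqDistUniform_le_klUniform (hM p))
  simp only [klUniform, sum_add_distrib, sum_const, card_univ, nsmul_eq_mul, ← mul_sum] at hrows
  generalize (Fintype.card ι : ℝ) = k at *
  have hk₀ : 0 < k := by linarith
  have hcancel : 1 / k * k = 1 := one_div_mul_cancel hk₀.ne'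
  have h := mul_le_mul_of_nonneg_left hrows (one_div_nonneg.2 hk₀.le)
  linear_combination
    h + (Real.log k - Real.log (k - 1) / (k - 1) * ∑ p, sqDistUniform (M p)) * hcancel

end RowStochastic

theorem stmt_11_general {ι : Type*} [Fintype ι] [Nontrivial ι] {d : ℝ}
    (hd : d ≤ 2 * ((Fintype.card ι : ℝ) - 1) * Real.log ((Fintype.card ι : ℝ) - 1))
    {M : Matrix ι ι ℝ} (hM : ∀ p, M p ∈ stdSimplex ℝ ι) :
    -(1 / (Fintype.card ι : ℝ)) * (∑ p, ∑ q, M p q * Real.log (M p q)) +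
        (d / 2) * Real.log (1 - 2 / (Fintype.card ι : ℝ) +
          (1 / (Fintype.card ι : ℝ) ^ 2) * ∑ p, ∑ q, (M p q) ^ 2) ≤
      Real.log (Fintype.card ι) + d * Real.log (1 - 1 / (Fintype.card ι : ℝ)) -
        ((2 * ((Fintype.card ι : ℝ) - 1) * Real.log ((Fintype.card ι : ℝ) - 1) - d) /
          (4 * ((Fintype.card ι : ℝ) - 1) ^ 2)) *
            ∑ p, ∑ q, (M p q - 1 / (Fintype.card ι : ℝ)) ^ 2 := by
  have hk : (2 : ℝ) ≤ Fintype.card ι := by exact_mod_cast Fintype.one_lt_card (α := ι)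
  have hS₀ : 0 ≤ ∑ p, sqDistUniform (M p) := sum_nonneg fun p _ => sqDistUniform_nonneg _
  have hS₁ := sum_sqDistUniform_le hM
  have hentropy := neg_one_div_mul_sum_sum_mul_log_le hM
  rw [sum_sum_sq_eq hM, log_one_sub_two_div_add (by linarith) hS₀]
  change _ ≤ _ - _ * ∑ p, sqDistUniform (M p)
  generalize (Fintype.card ι : ℝ) = k at *
  generalize ∑ p, sqDistUniform (M p) = S at *
  have hk₁ : 0 < k - 1 := by linarith
  have hlog := mul_log_one_add_le (x := S / (k - 1) ^ 2)
    (mul_nonneg (by linarith) (Real.log_nonneg (by linarith))) hd (by positivity)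
    ((div_le_one (by positivity)).2 (by nlinarith))
  have hlead : 2 * (k - 1) * Real.log (k - 1) * (S / (k - 1) ^ 2) =
      2 * (Real.log (k - 1) / (k - 1) * S) := by field_simp
  have hcoeff : (2 * (k - 1) * Real.log (k - 1) - d) / (4 * (k - 1) ^ 2) * S =
      (2 * (k - 1) * Real.log (k - 1) - d) / 4 * (S / (k - 1) ^ 2) := by field_simp
  linarith

/-- The Achlioptas–Naor inequality: for doubly stochastic M and d < d_{k−1} = 2(k−1)log(k−1),
φ(M) ≤ log k + d log(1−1/k) − ((d_{k−1}−d)/(4(k−1)²)) ∑ (m_{pq} − 1/k)², where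
φ(M) = −(1/k)∑ m_{pq} log m_{pq} + (d/2) log(1 − 2/k + (1/k²)∑ m_{pq}²).
(Real.log 0 = 0 in Mathlib, matching the convention 0·log 0 = 0.) -/
theorem stmt_11 (k : ℕ) (hk : 3 ≤ k) (d : ℝ) (hd : 0 < d)
    (hdk : d < 2 * ((k : ℝ) - 1) * Real.log ((k : ℝ) - 1))
    (M : Matrix (Fin k) (Fin k) ℝ)
    (hMnn : ∀ p q, 0 ≤ M p q)
    (hMrow : ∀ p, ∑ q, M p q = 1) (hMcol : ∀ q, ∑ p, M p q = 1) :
    -(1 / (k : ℝ)) * (∑ p : Fin k, ∑ q : Fin k, M p q * Real.log (M p q)) +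
        (d / 2) * Real.log (1 - 2 / (k : ℝ) + (1 / (k : ℝ) ^ 2) * ∑ p : Fin k, ∑ q : Fin k, (M p q) ^ 2) ≤
      Real.log k + d * Real.log (1 - 1 / (k : ℝ)) -
        ((2 * ((k : ℝ) - 1) * Real.log ((k : ℝ) - 1) - d) / (4 * ((k : ℝ) - 1) ^ 2)) *
          ∑ p : Fin k, ∑ q : Fin k, (M p q - 1 / (k : ℝ)) ^ 2 := by
  have : Nontrivial (Fin k) := Fin.nontrivial_iff_two_le.2 (by omega)
  simpa only [Fintype.card_fin] using
    stmt_11_general (by simpa only [Fintype.card_fin] using hdk.le) fun p => ⟨hMnn p, hMrow p⟩
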